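/- If there is an on-line algorithm partitioning every regular poset of width w into at most r(w) chains, then there is an on-line algorithm partitioning every poset of width w into at most w·r(w) chains; i.e., val(w) ≤ w·regval(w). -/

import Mathlib

/-- The restriction of a poset on `ℕ` to the elements presented up to time `n`. -/
def truncRel (r : ℕ → ℕ → Prop) (n : ℕ) : ℕ → ℕ → Prop :=
  fun a b => a ≤ n ∧ b ≤ n ∧ r a b

/-- The poset `(ℕ, r)` has width at most `w`. -/
def HasWidthLE (r : ℕ → ℕ → Prop) (w : ℕ) : Prop :=
  ∀ A : Finset ℕ, (∀ i ∈ A, ∀ j ∈ A, i ≠ j → ¬ r i j ∧ ¬ r j i) → A.card ≤ w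

/-- `col` is a partition of the poset `(ℕ, r)` into at most `k` chains. -/
def IsChainCol (r : ℕ → ℕ → Prop) (col : ℕ → ℕ) (k : ℕ) : Prop :=
  (∀ i, col i < k) ∧ ∀ i j, col i = col j → r i j ∨ r j i ∨ i = j

/-- An on-line chain partitioning algorithm `A` (the chain of element `i` depends
only on the poset restricted to the elements `0,…,i`) partitioning every poset of
width at most `w` into at most `k` chains. -/
def SolvesOnline (A : (ℕ → ℕ → Prop) → ℕ → ℕ) (w k : ℕ) : Prop :=
  ∀ r : ℕ → ℕ → Prop, IsPartialOrder ℕ r → HasWidthLE r w →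
    IsChainCol r (fun i => A (truncRel r i) i) k

/-- The `t`-th round (antichain `A_t`) of a regular presentation of width `w`:
elements `t·w, …, (t+1)·w − 1`. -/
def Level (w t : ℕ) : Finset ℕ := Finset.Ico (t * w) ((t + 1) * w)

/-- `A_s ⊑ A_t` : every element of level `s` is below some element of level `t`. -/
def SqBelow (r : ℕ → ℕ → Prop) (w s t : ℕ) : Prop :=
  ∀ i ∈ Level w s, ∃ j ∈ Level w t, r i j

/-- A regular poset of width `w`, presented round by round as a sequence of
maximum antichains (the levels): the levels are antichains of size `w` forming a
linear order under `⊑` with level `0` minimum and level `1` maximum, levels `0`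
and `1` induce a complete bipartite poset, and at every stage `T` of the
presentation any two `⊑`-consecutive levels induce a regular bipartite poset
(every comparability edge extends to a perfect matching). -/
def IsRegularPresentation (r : ℕ → ℕ → Prop) (w : ℕ) : Prop :=
  HasWidthLE r w ∧
  (∀ t, ∀ i ∈ Level w t, ∀ j ∈ Level w t, i ≠ j → ¬ r i j ∧ ¬ r j i) ∧
  (∀ s t, s ≠ t → SqBelow r w s t ∨ SqBelow r w t s) ∧
  (∀ t, t ≠ 0 → SqBelow r w 0 t) ∧
  (∀ t, t ≠ 1 → SqBelow r w t 1) ∧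
  (∀ i ∈ Level w 0, ∀ j ∈ Level w 1, r i j) ∧
  (∀ T p s, p ≤ T → s ≤ T → p ≠ s → SqBelow r w p s →
    (∀ q ≤ T, q ≠ p → q ≠ s → ¬ (SqBelow r w p q ∧ SqBelow r w q s)) →
    ∀ i, ∀ hi : i ∈ Level w p, ∀ j, ∀ hj : j ∈ Level w s, r i j →
      ∃ f : {a // a ∈ Level w p} → {b // b ∈ Level w s},
        Function.Bijective f ∧ (∀ a : {a // a ∈ Level w p}, r a.1 (f a).1) ∧ f ⟨i, hi⟩ = ⟨j, hj⟩)

/-- An on-line chain partitioning algorithm for regular posets: the chain of an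
element may depend on everything presented up to the end of its round. -/
def SolvesRegular (B : (ℕ → ℕ → Prop) → ℕ → ℕ) (w k : ℕ) : Prop :=
  ∀ r : ℕ → ℕ → Prop, IsPartialOrder ℕ r → IsRegularPresentation r w →
    IsChainCol r (fun i => B (truncRel r ((i / w + 1) * w - 1)) i) k

/-!
Let the rank of an element be the largest size `i` of an antichain consisting of it and of earlier
elements of rank at most `i`. Ranks lie between `1` and `w`, the elements of rank at most `i` have
width at most `i`, and every element of rank `i` lies in an antichain of size `i` of elements of
rank at most `i` that are known when it arrives. Hence it suffices to colour the elements of each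
rank `i` with `k` colours. Pad the elements of rank at most `i` by `w - i` isolated points and put
an antichain of `w` points below and another one above everything. Since the maximum antichains form
a lattice, every new element of rank `i` lies in a maximum antichain that is `⊑`-comparable with all
those chosen before it. Presenting these antichains round by round and keeping only the
comparabilities that extend to a perfect matching between two of them gives a regular poset of width
`w`; the existing algorithm for regular posets colours it, and comparabilities in it are
comparabilities in the given poset.
-/

namespace OnlineChainPartition

open Function Relation

section MaximumAntichains

variable {α : Type*} {r : α → α → Prop} {D D' : Set α} {w : ℕ} {A B E F : Finset α} {x : α}

/-- The relation `r` restricted to `D` has width at most `w`. -/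
def HasWidthOn (r : α → α → Prop) (D : Set α) (w : ℕ) : Prop :=
  ∀ A : Finset α, ↑A ⊆ D → IsAntichain r (A : Set α) → A.card ≤ w

theorem HasWidthOn.mono (h : HasWidthOn r D' w) (hD : D ⊆ D') : HasWidthOn r D w :=
  fun A hA => h A (hA.trans hD)

theorem HasWidthOn.swap (h : HasWidthOn r D w) : HasWidthOn (swap r) D w :=
  fun A hA hAr => h A hA hAr.swap

theorem hasWidthLE_iff_hasWidthOn {q : ℕ → ℕ → Prop} :
    HasWidthLE q w ↔ HasWidthOn q Set.univ w := by
  refine forall_congr' fun A => ?_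
  rw [forall_prop_of_true (Set.subset_univ _)]
  refine imp_congr_left ⟨fun h i hi j hj hij => (h i hi j hj hij).1, fun h i hi j hj hij => ?_⟩
  exact ⟨h hi hj hij, h hj hi hij.symm⟩

/-- `A` is an antichain of size `w` contained in `D`; it is a maximum antichain of `D` when `D` has
width `w`. -/
structure IsMaximumAntichain (r : α → α → Prop) (D : Set α) (w : ℕ) (A : Finset α) : Prop where
  subset : ↑A ⊆ D
  antichain : IsAntichain r (A : Set α)
  card_eq : A.card = w

theorem IsMaximumAntichain.mono (h : IsMaximumAntichain r D w A) (hD : D ⊆ D') :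
    IsMaximumAntichain r D' w A :=
  ⟨h.subset.trans hD, h.antichain, h.card_eq⟩

theorem IsMaximumAntichain.swap (h : IsMaximumAntichain r D w A) :
    IsMaximumAntichain (swap r) D w A :=
  ⟨h.subset, h.antichain.swap, h.card_eq⟩

/-- The relation `A ⊑ B`: every element of `A` lies below some element of `B`. -/
def Below (r : α → α → Prop) (A B : Finset α) : Prop :=
  ∀ a ∈ A, ∃ b ∈ B, r a b

instance [Std.Refl r] : Std.Refl (Below r) :=
  ⟨fun _ a ha => ⟨a, ha, Std.Refl.refl a⟩⟩

instance [IsTrans α r] : IsTrans (Finset α) (Below r) where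
  trans _ _ _ hAB hBC a ha := by
    obtain ⟨b, hb, hab⟩ := hAB a ha
    obtain ⟨c, hc, hbc⟩ := hBC b hb
    exact ⟨c, hc, _root_.trans hab hbc⟩

theorem IsMaximumAntichain.exists_symmGen [Std.Refl r] (hA : IsMaximumAntichain r D w A)
    (hr : HasWidthOn r D w) (hx : x ∈ D) : ∃ a ∈ A, SymmGen r x a := by
  classical
  by_contra! h
  have hxA : x ∉ A := fun hxA => h x hxA (.of_rel (refl x))
  have hanti : IsAntichain r (insert x A : Finset α) := by
    rw [Finset.coe_insert]
    exact hA.antichain.insert (fun b hb _ hbx => h b hb (.of_rel_symm hbx))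
      fun b hb _ hxb => h b hb (.of_rel hxb)
  have hcard := hr (insert x A) (by simp [Set.insert_subset_iff, hx, hA.subset]) hanti
  rw [Finset.card_insert_of_notMem hxA, hA.card_eq] at hcard
  omega

theorem Below.swap [IsPreorder α r] (hA : IsMaximumAntichain r D w A)
    (hB : IsMaximumAntichain r D w B) (hr : HasWidthOn r D w) (h : Below r A B) :
    Below (swap r) B A := by
  intro b hb
  obtain ⟨a, ha, hba | hab⟩ := hA.exists_symmGen hr (hB.subset hb)
  · obtain ⟨b', hb', hab'⟩ := h a ha
    obtain rfl := hB.antichain.eq hb hb' (_root_.trans hba hab')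
    exact ⟨a, ha, hab'⟩
  · exact ⟨a, ha, hab⟩

theorem below_swap_iff [IsPreorder α r] (hA : IsMaximumAntichain r D w A)
    (hB : IsMaximumAntichain r D w B) (hr : HasWidthOn r D w) :
    Below (swap r) B A ↔ Below r A B :=
  ⟨Below.swap hB.swap hA.swap hr.swap, Below.swap hA hB hr⟩

theorem symmGen_below_swap_iff [IsPreorder α r] (hA : IsMaximumAntichain r D w A)
    (hB : IsMaximumAntichain r D w B) (hr : HasWidthOn r D w) :
    SymmGen (Below (swap r)) A B ↔ SymmGen (Below r) A B := by
  simp only [SymmGen, below_swap_iff hA hB hr, below_swap_iff hB hA hr, or_comm]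

open Classical in
/-- The minimal elements of `A ∪ B`, which form the meet of two maximum antichains in the lattice
of maximum antichains; `minUnion (swap r) A B` is their join. -/
noncomputable def minUnion (r : α → α → Prop) (A B : Finset α) : Finset α :=
  {x ∈ A ∪ B | ∀ y ∈ A ∪ B, r y x → y = x}

theorem mem_minUnion :
    x ∈ minUnion r A B ↔ (x ∈ A ∨ x ∈ B) ∧ ∀ y, y ∈ A ∨ y ∈ B → r y x → y = x := by
  simp only [minUnion, Finset.mem_filter, Finset.mem_union]

theorem minUnion_comm (r : α → α → Prop) (A B : Finset α) : minUnion r A B = minUnion r B A := by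
  ext x
  simp only [mem_minUnion, or_comm]

theorem isAntichain_minUnion (r : α → α → Prop) (A B : Finset α) :
    IsAntichain r (minUnion r A B : Set α) :=
  fun a ha _ hb hab h => hab ((mem_minUnion.1 hb).2 a (mem_minUnion.1 ha).1 h)

theorem exists_rel_of_notMem_minUnion (hA : IsAntichain r (A : Set α)) (hx : x ∈ A)
    (h : x ∉ minUnion r A B) : ∃ y ∈ B, r y x ∧ y ≠ x := by
  simp only [mem_minUnion, hx, true_or, true_and, not_forall] at h
  obtain ⟨y, hy, hyx, hne⟩ := h
  exact ⟨y, hy.resolve_left fun hyA => hne (hA.eq hyA hx hyx), hyx, hne⟩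

theorem mem_minUnion_or_mem_minUnion_swap [IsPartialOrder α r] (hA : IsAntichain r (A : Set α))
    (hB : IsAntichain r (B : Set α)) (hx : x ∈ A) :
    x ∈ minUnion r A B ∨ x ∈ minUnion (swap r) A B := by
  by_contra! h
  obtain ⟨y, hy, hyx, hne⟩ := exists_rel_of_notMem_minUnion hA hx h.1
  obtain ⟨z, hz, hxz, -⟩ := exists_rel_of_notMem_minUnion hA.swap hx h.2
  obtain rfl := hB.eq hy hz (_root_.trans hyx hxz)
  exact hne (antisymm hyx hxz)

theorem mem_minUnion_of_mem_inter (hA : IsAntichain r (A : Set α)) (hB : IsAntichain r (B : Set α))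
    (hxA : x ∈ A) (hxB : x ∈ B) : x ∈ minUnion r A B :=
  mem_minUnion.2 ⟨.inl hxA, fun _ hy hyx => hy.elim (hA.eq · hxA hyx) (hB.eq · hxB hyx)⟩

theorem union_subset_minUnion_union [DecidableEq α] [IsPartialOrder α r]
    (hA : IsAntichain r (A : Set α)) (hB : IsAntichain r (B : Set α)) :
    A ∪ B ⊆ minUnion r A B ∪ minUnion (swap r) A B := by
  intro x hx
  rw [Finset.mem_union] at hx ⊢
  rcases hx with hx | hx
  · exact mem_minUnion_or_mem_minUnion_swap hA hB hx
  · rw [minUnion_comm r, minUnion_comm (swap r)]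
    exact mem_minUnion_or_mem_minUnion_swap hB hA hx

theorem IsMaximumAntichain.minUnion [IsPartialOrder α r] (hA : IsMaximumAntichain r D w A)
    (hB : IsMaximumAntichain r D w B) (hr : HasWidthOn r D w) :
    IsMaximumAntichain r D w (minUnion r A B) := by
  classical
  set M := OnlineChainPartition.minUnion r A B
  set J := OnlineChainPartition.minUnion (Function.swap r) A B
  have hMD : ↑M ⊆ D := fun x hx => (mem_minUnion.1 hx).1.elim (hA.subset ·) (hB.subset ·)
  have hJD : ↑J ⊆ D := fun x hx => (mem_minUnion.1 hx).1.elim (hA.subset ·) (hB.subset ·)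
  have hMw : M.card ≤ w := hr M hMD (isAntichain_minUnion r A B)
  have hJw : J.card ≤ w := hr.swap J hJD (isAntichain_minUnion (Function.swap r) A B)
  have hunion : (A ∪ B).card ≤ (M ∪ J).card :=
    Finset.card_le_card (union_subset_minUnion_union hA.antichain hB.antichain)
  have hinter : (A ∩ B).card ≤ (M ∩ J).card := by
    refine Finset.card_le_card fun x hx => ?_
    obtain ⟨hxA, hxB⟩ := Finset.mem_inter.1 hx
    exact Finset.mem_inter.2 ⟨mem_minUnion_of_mem_inter hA.antichain hB.antichain hxA hxB,
      mem_minUnion_of_mem_inter hA.swap.antichain hB.swap.antichain hxA hxB⟩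
  have hAB := Finset.card_union_add_card_inter A B
  have hMJ := Finset.card_union_add_card_inter M J
  rw [hA.card_eq, hB.card_eq] at hAB
  exact ⟨hMD, isAntichain_minUnion r A B, by omega⟩

theorem minUnion_below_left [Std.Refl r] (hA : IsMaximumAntichain r D w A)
    (hB : IsMaximumAntichain r D w B) (hr : HasWidthOn r D w) : Below r (minUnion r A B) A := by
  intro x hx
  obtain ⟨hxAB, hmin⟩ := mem_minUnion.1 hx
  obtain ⟨a, ha, hxa | hax⟩ :=
    hA.exists_symmGen hr (hxAB.elim (hA.subset ·) (hB.subset ·))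
  · exact ⟨a, ha, hxa⟩
  · obtain rfl := hmin a (.inl ha) hax
    exact ⟨a, ha, refl a⟩

theorem minUnion_below_right [Std.Refl r] (hA : IsMaximumAntichain r D w A)
    (hB : IsMaximumAntichain r D w B) (hr : HasWidthOn r D w) : Below r (minUnion r A B) B :=
  minUnion_comm r B A ▸ minUnion_below_left hB hA hr

theorem Below.below_minUnion [IsPartialOrder α r] (hF : IsMaximumAntichain r D w F)
    (hA : IsMaximumAntichain r D w A) (hB : IsMaximumAntichain r D w B) (hr : HasWidthOn r D w)
    (hFA : Below r F A) (hFB : Below r F B) : Below r F (minUnion r A B) := by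
  rw [← below_swap_iff hF (hA.minUnion hB hr) hr]
  intro x hx
  rcases (mem_minUnion.1 hx).1 with hxA | hxB
  · exact hFA.swap hF hA hr x hxA
  · exact hFB.swap hF hB hr x hxB

theorem symmGen_below_minUnion [IsPartialOrder α r] (hF : IsMaximumAntichain r D w F)
    (hA : IsMaximumAntichain r D w A) (hB : IsMaximumAntichain r D w B) (hr : HasWidthOn r D w)
    (hAF : SymmGen (Below r) A F) (hBF : SymmGen (Below r) B F) :
    SymmGen (Below r) (minUnion r A B) F := by
  rcases hAF with hAF | hFA
  · exact .of_rel (_root_.trans (minUnion_below_left hA hB hr) hAF)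
  rcases hBF with hBF | hFB
  · exact .of_rel (_root_.trans (minUnion_below_right hA hB hr) hBF)
  · exact .of_rel_symm (hFA.below_minUnion hF hA hB hr hFB)

theorem mem_minUnion_of_rel [IsPartialOrder α r] (hA : IsAntichain r (A : Set α))
    (hB : IsAntichain r (B : Set α)) (hx : x ∈ A) {b : α} (hb : b ∈ B) (hxb : r x b) :
    x ∈ minUnion r A B := by
  refine mem_minUnion.2 ⟨.inl hx, fun y hy hyx => hy.elim (hA.eq · hx hyx) fun hyB => ?_⟩
  obtain rfl := hB.eq hyB hb (_root_.trans hyx hxb)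
  exact antisymm hyx hxb

theorem exists_isMaximumAntichain_symmGen_of_mem [IsPartialOrder α r]
    (hA : IsMaximumAntichain r D w A) (hx : x ∈ A) (hE : IsMaximumAntichain r D w E)
    (hr : HasWidthOn r D w) :
    ∃ M, IsMaximumAntichain r D w M ∧ x ∈ M ∧ SymmGen (Below r) M E ∧
      ∀ F, IsMaximumAntichain r D w F → SymmGen (Below r) A F → SymmGen (Below r) E F →
        SymmGen (Below r) M F := by
  obtain ⟨e, he, hxe | hex⟩ := hE.exists_symmGen hr (hA.subset hx)
  · exact ⟨minUnion r A E, hA.minUnion hE hr,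
      mem_minUnion_of_rel hA.antichain hE.antichain hx he hxe,
      .of_rel (minUnion_below_right hA hE hr), fun F hF => symmGen_below_minUnion hF hA hE hr⟩
  · have hM := hA.swap.minUnion hE.swap hr.swap
    have hME := minUnion_below_right hA.swap hE.swap hr.swap
    refine ⟨minUnion (swap r) A E, hM.swap,
      mem_minUnion_of_rel hA.swap.antichain hE.swap.antichain hx he hex,
      (symmGen_below_swap_iff hM.swap hE hr).1 (.of_rel hME), fun F hF hAF hEF => ?_⟩
    rw [← symmGen_below_swap_iff hM.swap hF hr]
    exact symmGen_below_minUnion hF.swap hA.swap hE.swap hr.swap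
      ((symmGen_below_swap_iff hA hF hr).2 hAF) ((symmGen_below_swap_iff hE hF hr).2 hEF)

theorem exists_isMaximumAntichain_forall_symmGen [IsPartialOrder α r]
    (hA : IsMaximumAntichain r D w A) (hx : x ∈ A) (hr : HasWidthOn r D w)
    {s : Finset (Finset α)} (hs : ∀ E ∈ s, IsMaximumAntichain r D w E)
    (hchain : IsChain (Below r) (s : Set (Finset α))) :
    ∃ M, IsMaximumAntichain r D w M ∧ x ∈ M ∧ ∀ E ∈ s, SymmGen (Below r) M E := by
  classical
  induction s using Finset.induction_on with
  | empty => exact ⟨A, hA, hx, by simp⟩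
  | insert E s _ ih =>
    simp only [Finset.forall_mem_insert, Finset.coe_insert] at hs hchain ⊢
    obtain ⟨N, hN, hxN, hNs⟩ := ih hs.2 (hchain.mono (Set.subset_insert _ _))
    obtain ⟨M, hM, hxM, hME, hMF⟩ := exists_isMaximumAntichain_symmGen_of_mem hN hxN hs.1 hr
    refine ⟨M, hM, hxM, hME, fun F hF => hMF F (hs.2 F hF) (hNs F hF) ?_⟩
    exact hchain.total (Set.mem_insert _ _) (Set.mem_insert_of_mem _ hF)

theorem Below.card_le_card_of_forall_rel [IsPreorder α r] (hA : IsMaximumAntichain r D w A)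
    (hB : IsMaximumAntichain r D w B) (hr : HasWidthOn r D w) (hAB : Below r A B) (hE : E ⊆ A)
    (hFB : F ⊆ B) (hEF : ∀ a ∈ E, ∀ b ∈ B, r a b → b ∈ F) : E.card ≤ F.card := by
  classical
  have hnotMem : ∀ a ∈ E, ∀ b ∈ B \ F, ¬ r a b := fun a ha b hb hab =>
    (Finset.mem_sdiff.1 hb).2 (hEF a ha b (Finset.mem_sdiff.1 hb).1 hab)
  have hnotMem' : ∀ a ∈ E, ∀ b ∈ B \ F, ¬ r b a := fun a ha b hb hba => by
    obtain ⟨b', hb', hab'⟩ := hAB a (hE ha)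
    obtain rfl := hB.antichain.eq (Finset.mem_sdiff.1 hb).1 hb' (_root_.trans hba hab')
    exact hnotMem a ha b hb hab'
  have hanti : IsAntichain r (E ∪ B \ F : Finset α) := by
    rw [Finset.coe_union, isAntichain_union]
    exact ⟨hA.antichain.subset hE, hB.antichain.subset (by simp),
      fun a ha b hb _ => ⟨hnotMem a ha b hb, hnotMem' a ha b hb⟩⟩
  have hdisj : Disjoint E (B \ F) :=
    Finset.disjoint_left.2 fun a ha haF => hnotMem a ha a haF (refl a)
  have hsub : ↑(E ∪ B \ F) ⊆ D := by
    rw [Finset.coe_union, Set.union_subset_iff]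
    exact ⟨(Finset.coe_subset.2 hE).trans hA.subset,
      (Finset.coe_subset.2 Finset.sdiff_subset).trans hB.subset⟩
  have hcard := hr _ hsub hanti
  rw [Finset.card_union_of_disjoint hdisj] at hcard
  have hBF := Finset.card_sdiff_add_card_eq_card hFB
  rw [hB.card_eq] at hBF
  omega

theorem Below.exists_bijOn [IsPreorder α r] (hA : IsMaximumAntichain r D w A)
    (hB : IsMaximumAntichain r D w B) (hr : HasWidthOn r D w) (hAB : Below r A B) :
    ∃ f : α → α, Set.BijOn f A B ∧ ∀ a ∈ A, r a (f a) := by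
  classical
  obtain ⟨g, hg, hgB⟩ := (Finset.all_card_le_biUnion_card_iff_exists_injective
    fun a : A => {b ∈ B | r a b}).1 fun S => by
      rw [← S.card_map (.subtype (· ∈ A))]
      refine hAB.card_le_card_of_forall_rel hA hB hr (Finset.map_subtype_subset S)
        (Finset.biUnion_subset.2 fun _ _ => Finset.filter_subset _ _) fun a ha b hb hab => ?_
      obtain ⟨a, haS, rfl⟩ := Finset.mem_map.1 ha
      exact Finset.mem_biUnion.2 ⟨a, haS, Finset.mem_filter.2 ⟨hb, hab⟩⟩
  have hext : ∀ a : A, extend Subtype.val g id a = g a := Subtype.val_injective.extend_apply g id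
  simp only [Finset.mem_filter] at hgB
  have hmaps : Set.MapsTo (extend Subtype.val g id) A B :=
    fun a ha => hext ⟨a, ha⟩ ▸ (hgB ⟨a, ha⟩).1
  have hinj : Set.InjOn (extend Subtype.val g id) A := fun a ha b hb hab => by
    rw [hext ⟨a, ha⟩, hext ⟨b, hb⟩] at hab
    exact congrArg Subtype.val (hg hab)
  refine ⟨_, ⟨hmaps, hinj, ?_⟩, fun a ha => hext ⟨a, ha⟩ ▸ (hgB ⟨a, ha⟩).2⟩
  exact Finset.surjOn_of_injOn_of_card_le _ hmaps hinj (hB.card_eq.trans hA.card_eq.symm).le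

end MaximumAntichains

section GreedyLevels

variable {α : Type*} {r r' : α → α → Prop} {D D' : ℕ → Set α} {x x' : ℕ → α} {w n : ℕ}

/-- An on-line choice of maximum antichains: the `n`-th one contains the pivot `x n`, is taken among
the elements `D n` available at time `n`, and is `⊑`-comparable with all the earlier ones. -/
noncomputable def greedyLevel (r : α → α → Prop) (w : ℕ) (D : ℕ → Set α) (x : ℕ → α) (n : ℕ) :
    Finset α :=
  Classical.epsilon fun A => IsMaximumAntichain r (D n) w A ∧ x n ∈ A ∧
    ∀ m, ∀ _ : m < n, SymmGen (Below r) A (greedyLevel r w D x m)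
termination_by n

theorem greedyLevel_spec [IsPartialOrder α r] (hD : Monotone D) (hr : HasWidthOn r (⋃ n, D n) w)
    (hx : ∀ n, ∃ A, IsMaximumAntichain r (D n) w A ∧ x n ∈ A) (n : ℕ) :
    IsMaximumAntichain r (D n) w (greedyLevel r w D x n) ∧ x n ∈ greedyLevel r w D x n ∧
      ∀ m < n, SymmGen (Below r) (greedyLevel r w D x n) (greedyLevel r w D x m) := by
  classical
  induction n using Nat.strong_induction_on with
  | _ n ih =>
    obtain ⟨A, hA, hxA⟩ := hx n
    have hs : ∀ E ∈ (Finset.range n).image (greedyLevel r w D x),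
        IsMaximumAntichain r (D n) w E := by
      simp only [Finset.forall_mem_image, Finset.mem_range]
      exact fun m hm => (ih m hm).1.mono (hD hm.le)
    have hchain : IsChain (Below r) ((Finset.range n).image (greedyLevel r w D x) : Set _) := by
      simp only [Finset.coe_image, Finset.coe_range]
      rintro _ ⟨l, hl, rfl⟩ _ ⟨m, hm, rfl⟩ hne
      rcases lt_trichotomy l m with hlm | rfl | hml
      · exact ((ih m hm).2.2 l hlm).symm
      · exact absurd rfl hne
      · exact (ih l hl).2.2 m hml
    obtain ⟨M, hM, hxM, hMs⟩ := exists_isMaximumAntichain_forall_symmGen hA hxA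
      (hr.mono (Set.subset_iUnion D n)) hs hchain
    rw [greedyLevel]
    refine Classical.epsilon_spec (p := fun A => IsMaximumAntichain r (D n) w A ∧ x n ∈ A ∧
      ∀ m, ∀ _ : m < n, SymmGen (Below r) A (greedyLevel r w D x m))
      ⟨M, hM, hxM, fun m hm => hMs _ ?_⟩
    exact Finset.mem_image_of_mem _ (Finset.mem_range.2 hm)

theorem isAntichain_congr_of_subset {D A : Set α} (hA : A ⊆ D)
    (h : ∀ a ∈ D, ∀ b ∈ D, r a b ↔ r' a b) : IsAntichain r A ↔ IsAntichain r' A :=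
  forall₂_congr fun a ha => forall₂_congr fun b hb => imp_congr_right fun _ =>
    not_congr (h a (hA ha) b (hA hb))

theorem isMaximumAntichain_congr {D : Set α} {A : Finset α}
    (h : ∀ a ∈ D, ∀ b ∈ D, r a b ↔ r' a b) :
    IsMaximumAntichain r D w A ↔ IsMaximumAntichain r' D w A := by
  have hanti (hA : ↑A ⊆ D) := isAntichain_congr_of_subset hA h
  exact ⟨fun hA => ⟨hA.subset, (hanti hA.subset).1 hA.antichain, hA.card_eq⟩,
    fun hA => ⟨hA.subset, (hanti hA.subset).2 hA.antichain, hA.card_eq⟩⟩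

theorem below_congr {D : Set α} {A B : Finset α} (hA : ↑A ⊆ D) (hB : ↑B ⊆ D)
    (h : ∀ a ∈ D, ∀ b ∈ D, r a b ↔ r' a b) : Below r A B ↔ Below r' A B :=
  forall₂_congr fun a ha => exists_congr fun b =>
    and_congr_right fun hb => h a (hA ha) b (hB hb)

theorem greedyLevel_congr (hD : Monotone D)
    (hsub : ∀ m ≤ n, ↑(greedyLevel r w D x m) ⊆ D m) (hDD' : ∀ m ≤ n, D m = D' m)
    (hxx' : ∀ m ≤ n, x m = x' m) (hrr' : ∀ a ∈ D n, ∀ b ∈ D n, r a b ↔ r' a b) :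
    greedyLevel r w D x n = greedyLevel r' w D' x' n := by
  induction n using Nat.strong_induction_on with
  | _ n ih =>
    rw [greedyLevel, greedyLevel, ← hDD' n le_rfl, ← hxx' n le_rfl]
    congr 1
    ext A
    rw [← isMaximumAntichain_congr hrr']
    refine and_congr_right fun hA => and_congr_right fun _ => forall₂_congr fun m hm => ?_
    have hlevel : greedyLevel r w D x m = greedyLevel r' w D' x' m :=
      ih m hm (fun l hl => hsub l (hl.trans hm.le)) (fun l hl => hDD' l (hl.trans hm.le))
        (fun l hl => hxx' l (hl.trans hm.le))
        fun a ha b hb => hrr' a (hD hm.le ha) b (hD hm.le hb)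
    have hm' := (hsub m hm.le).trans (hD hm.le)
    rw [← hlevel]
    exact or_congr (below_congr hA.subset hm' hrr') (below_congr hm' hA.subset hrr')

end GreedyLevels

section MatchingPresentation

variable {α : Type*} {r : α → α → Prop} {A B C : Finset α} {a b c : α}

/-- The pair `(a, b)` belongs to a perfect matching of `A` with `B` along the relation `r`. -/
def ExtendsToMatching (r : α → α → Prop) (A B : Finset α) (a b : α) : Prop :=
  ∃ f : α → α, Set.BijOn f A B ∧ (∀ x ∈ A, r x (f x)) ∧ f a = b

theorem ExtendsToMatching.rel (h : ExtendsToMatching r A B a b) (ha : a ∈ A) : r a b := by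
  obtain ⟨f, -, hf, rfl⟩ := h
  exact hf a ha

theorem ExtendsToMatching.trans [IsTrans α r] (hab : ExtendsToMatching r A B a b)
    (hbc : ExtendsToMatching r B C b c) : ExtendsToMatching r A C a c := by
  obtain ⟨f, hf, hfr, rfl⟩ := hab
  obtain ⟨g, hg, hgr, rfl⟩ := hbc
  exact ⟨g ∘ f, hg.comp hf,
    fun x hx => _root_.trans (hfr x hx) (hgr (f x) (hf.mapsTo hx)), rfl⟩

theorem extendsToMatching_of_forall_rel (hcard : A.card = B.card) (h : ∀ a ∈ A, ∀ b ∈ B, r a b)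
    (ha : a ∈ A) (hb : b ∈ B) : ExtendsToMatching r A B a b := by
  classical
  have : Nonempty α := ⟨a⟩
  obtain ⟨f, hf⟩ := A.finite_toSet.exists_bijOn_of_encard_eq (t := (B : Set α)) (by simp [hcard])
  have hf' : Set.BijOn (Equiv.swap (f a) b ∘ f) A B :=
    (Equiv.swap_bijOn_self (iff_of_true (hf.mapsTo ha) hb)).comp hf
  exact ⟨_, hf', fun x hx => h x hx _ (hf'.mapsTo hx), Equiv.swap_apply_left _ _⟩

theorem extendsToMatching_congr {r' : α → α → Prop} (h : ∀ a ∈ A, ∀ b ∈ B, r a b ↔ r' a b) :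
    ExtendsToMatching r A B a b ↔ ExtendsToMatching r' A B a b := by
  refine exists_congr fun f => and_congr_right fun hf => and_congr_left' ?_
  exact forall₂_congr fun x hx => h x hx (f x) (hf.mapsTo hx)

variable {q q' : ℕ → ℕ → Prop} {w N s t u e e' : ℕ}

/-- The strict linear order of the rounds induced by `⊑`, where rounds that present the same
antichain are ordered by time. -/
def LevelLT (q : ℕ → ℕ → Prop) (w s t : ℕ) : Prop :=
  SqBelow q w s t ∧ (SqBelow q w t s → s < t)

/-- The order on the presented elements that keeps only those comparabilities between two rounds
which extend to a perfect matching. -/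
def matchRel (q : ℕ → ℕ → Prop) (w e e' : ℕ) : Prop :=
  e = e' ∨ LevelLT q w (e / w) (e' / w) ∧
    ExtendsToMatching q (Level w (e / w)) (Level w (e' / w)) e e'

/-- The levels of `q` form a chain, under `⊑`, of maximum antichains with minimum level `0` and
maximum level `1`, the two being completely comparable. This is a regular presentation except that
levels may be repeated and that comparabilities need not extend to perfect matchings. -/
structure IsPreregular (q : ℕ → ℕ → Prop) (w : ℕ) : Prop where
  hasWidthLE : HasWidthLE q w
  antichain (t : ℕ) : IsAntichain q (Level w t : Set ℕ)
  total (s t : ℕ) : SqBelow q w s t ∨ SqBelow q w t s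
  zero_below (t : ℕ) : SqBelow q w 0 t
  below_one (t : ℕ) : SqBelow q w t 1
  not_one_below (t : ℕ) : t ≠ 1 → ¬ SqBelow q w 1 t
  complete : ∀ i ∈ Level w 0, ∀ j ∈ Level w 1, q i j

theorem card_Level (w t : ℕ) : (Level w t).card = w := by
  rw [Level, Nat.card_Ico, Nat.succ_mul, Nat.add_sub_cancel_left]

theorem mem_Level [NeZero w] : e ∈ Level w t ↔ e / w = t := by
  rw [Level, Finset.mem_Ico, Nat.div_eq_iff (NeZero.pos w)]
  have := NeZero.pos w
  rw [Nat.succ_mul]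
  omega

theorem mem_Level_div [NeZero w] (e : ℕ) : e ∈ Level w (e / w) :=
  mem_Level.2 rfl

theorem sqBelow_trans [IsTrans ℕ q] (hst : SqBelow q w s t) (htu : SqBelow q w t u) :
    SqBelow q w s u :=
  IsTrans.trans (r := Below q) _ _ _ hst htu

theorem LevelLT.asymm (hst : LevelLT q w s t) (hts : LevelLT q w t s) : False :=
  (hst.2 hts.1).asymm (hts.2 hst.1)

theorem LevelLT.trans [IsTrans ℕ q] (hst : LevelLT q w s t) (htu : LevelLT q w t u) :
    LevelLT q w s u :=
  ⟨sqBelow_trans hst.1 htu.1, fun hus =>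
    (hst.2 (sqBelow_trans htu.1 hus)).trans (htu.2 (sqBelow_trans hus hst.1))⟩

theorem not_levelLT_self (q : ℕ → ℕ → Prop) (w t : ℕ) : ¬ LevelLT q w t t :=
  fun h => h.asymm h

theorem IsPreregular.levelLT_or_levelLT (hq : IsPreregular q w) (hst : s ≠ t) :
    LevelLT q w s t ∨ LevelLT q w t s := by
  have := hq.total s t
  simp only [LevelLT]
  grind

theorem IsPreregular.isStrictTotalOrder [IsTrans ℕ q] (hq : IsPreregular q w) :
    IsStrictTotalOrder ℕ (LevelLT q w) where
  irrefl := not_levelLT_self q w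
  trans _ _ _ := LevelLT.trans
  trichotomous _ _ hst hts := by_contra fun hne => (hq.levelLT_or_levelLT hne).elim hst hts

theorem IsPreregular.isMaximumAntichain (hq : IsPreregular q w) (t : ℕ) :
    IsMaximumAntichain q Set.univ w (Level w t) :=
  ⟨Set.subset_univ _, hq.antichain t, card_Level w t⟩

theorem IsPreregular.zero_levelLT (hq : IsPreregular q w) (ht : t ≠ 0) : LevelLT q w 0 t :=
  ⟨hq.zero_below t, fun _ => Nat.pos_of_ne_zero ht⟩

theorem IsPreregular.levelLT_one (hq : IsPreregular q w) (ht : t ≠ 1) : LevelLT q w t 1 :=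
  ⟨hq.below_one t, fun h => absurd h (hq.not_one_below t ht)⟩

theorem isPartialOrder_matchRel [IsTrans ℕ q] : IsPartialOrder ℕ (matchRel q w) where
  refl _ := .inl rfl
  trans := by
    rintro a b c (rfl | ⟨hab, mab⟩) (rfl | ⟨hbc, mbc⟩)
    · exact .inl rfl
    · exact .inr ⟨hbc, mbc⟩
    · exact .inr ⟨hab, mab⟩
    · exact .inr ⟨hab.trans hbc, mab.trans mbc⟩
  antisymm := by
    rintro a b (rfl | ⟨hab, -⟩) hba
    · rfl
    rcases hba with rfl | ⟨hba, -⟩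
    · rfl
    · exact (hab.asymm hba).elim

theorem rel_of_matchRel [Std.Refl q] [NeZero w] (h : matchRel q w e e') : q e e' := by
  rcases h with rfl | ⟨-, h⟩
  · exact refl e
  · exact h.rel (mem_Level_div e)

theorem matchRel_of_levelLT [NeZero w] (hst : LevelLT q w s t) (he : e ∈ Level w s)
    (he' : e' ∈ Level w t) (h : ExtendsToMatching q (Level w s) (Level w t) e e') :
    matchRel q w e e' := by
  rw [mem_Level] at he he'
  subst he he'
  exact .inr ⟨hst, h⟩

theorem IsPreregular.exists_bijOn_matchRel [IsPreorder ℕ q] [NeZero w] (hq : IsPreregular q w)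
    (hst : LevelLT q w s t) :
    ∃ f : ℕ → ℕ, Set.BijOn f (Level w s) (Level w t) ∧ ∀ e ∈ Level w s, matchRel q w e (f e) := by
  obtain ⟨f, hf, hfq⟩ := Below.exists_bijOn (hq.isMaximumAntichain s) (hq.isMaximumAntichain t)
    (hasWidthLE_iff_hasWidthOn.1 hq.hasWidthLE) hst.1
  exact ⟨f, hf, fun e he => matchRel_of_levelLT hst he (hf.mapsTo he) ⟨f, hf, hfq, rfl⟩⟩

theorem IsPreregular.sqBelow_matchRel [IsPreorder ℕ q] [NeZero w] (hq : IsPreregular q w)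
    (hst : LevelLT q w s t) : SqBelow (matchRel q w) w s t := by
  obtain ⟨f, hf, hfq⟩ := hq.exists_bijOn_matchRel hst
  exact fun e he => ⟨f e, hf.mapsTo he, hfq e he⟩

theorem exists_injOn_insert [DecidableEq α] (hr : Std.Refl r) (ha : a ∉ A) (haB : a ∈ B)
    (hA : IsAntichain r (insert a A : Set α)) {g : α → α} (hmaps : Set.MapsTo g A B)
    (hinj : Set.InjOn g A) (hg : ∀ x ∈ A, r x (g x)) :
    ∃ f : α → α, Set.MapsTo f (insert a A) B ∧ Set.InjOn f (insert a A) ∧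
      ∀ x ∈ insert a A, r x (f x) := by
  have hne : ∀ x ∈ A, x ≠ a := fun x hx hxa => ha (hxa ▸ hx)
  have hupdate : Set.EqOn (update g a a) g A := fun x hx => update_of_ne (hne x hx) a g
  have hnotMem : a ∉ g '' A := by
    rintro ⟨x, hx, hxa⟩
    exact hA (Set.mem_insert_of_mem a hx) (Set.mem_insert a _) (hne x hx) (hxa ▸ hg x hx)
  refine ⟨update g a a, ?_, ?_, ?_⟩
  · rintro x (rfl | hx)
    · rwa [update_self, Finset.mem_coe]
    · exact hmaps.congr hupdate.symm hx
  · rw [Set.injOn_insert (by simpa using ha), hupdate.injOn_iff, hupdate.image_eq, update_self]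
    exact ⟨hinj, hnotMem⟩
  · rw [Finset.forall_mem_insert, update_self]
    exact ⟨hr.refl a, fun x hx => hupdate hx ▸ hg x hx⟩

theorem IsPreregular.exists_injOn_level [IsPreorder ℕ q] [NeZero w] (hq : IsPreregular q w)
    (S : Finset ℕ) (hS : IsAntichain (matchRel q w) (S : Set ℕ))
    (ht : ∀ e ∈ S, e / w = t ∨ LevelLT q w (e / w) t) :
    ∃ g : ℕ → ℕ, Set.MapsTo g S (Level w t) ∧ Set.InjOn g S ∧ ∀ e ∈ S, matchRel q w e (g e) := by
  classical
  have := hq.isStrictTotalOrder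
  have hpo : IsPartialOrder ℕ (matchRel q w) := isPartialOrder_matchRel
  induction S using @Finset.induction_on_max_value ℕ _ (linearOrderOfSTO (LevelLT q w)) _ (· / w)
    generalizing t with
  | empty => exact ⟨id, by simp [Set.MapsTo]⟩
  | insert e S he hmax ih =>
    rw [Finset.coe_insert] at hS
    obtain ⟨g, hgmaps, hginj, hg⟩ := ih (hS.subset (Set.subset_insert e _)) hmax
    obtain ⟨f, hfmaps, hfinj, hf⟩ :=
      exists_injOn_insert hpo.toRefl he (mem_Level_div e) hS hgmaps hginj hg
    rw [Finset.coe_insert]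
    rcases ht e (Finset.mem_insert_self e S) with rfl | het
    · exact ⟨f, hfmaps, hfinj, hf⟩
    obtain ⟨m, hm, hmq⟩ := hq.exists_bijOn_matchRel het
    exact ⟨m ∘ f, hm.mapsTo.comp hfmaps, hm.injOn.comp hfinj hfmaps,
      fun x hx => hpo.trans _ _ _ (hf x hx) (hmq _ (hfmaps (by simpa using hx)))⟩

theorem IsPreregular.hasWidthLE_matchRel [IsPreorder ℕ q] [NeZero w] (hq : IsPreregular q w) :
    HasWidthLE (matchRel q w) w := by
  refine hasWidthLE_iff_hasWidthOn.2 fun S _ hS => ?_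
  obtain ⟨g, hmaps, hinj, -⟩ := hq.exists_injOn_level (t := 1) S hS
    fun e _ => or_iff_not_imp_left.2 hq.levelLT_one
  exact (Finset.card_le_card_of_injOn g hmaps hinj).trans_eq (card_Level w 1)

theorem extendsToMatching_of_matchRel [NeZero w] (hst : s ≠ t) (he : e ∈ Level w s)
    (he' : e' ∈ Level w t) (h : matchRel q w e e') :
    LevelLT q w s t ∧ ExtendsToMatching q (Level w s) (Level w t) e e' := by
  rw [mem_Level] at he he'
  subst he he'
  exact h.resolve_left fun hee' => hst (congrArg (· / w) hee')

/-- The new order is regular since a perfect matching along `q` between two levels consists of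
pairs that extend to a perfect matching. -/
theorem IsPreregular.isRegularPresentation_matchRel [IsPreorder ℕ q] [NeZero w]
    (hq : IsPreregular q w) : IsRegularPresentation (matchRel q w) w := by
  refine ⟨hq.hasWidthLE_matchRel, fun t i hi j hj hij => ?_, fun s t hst => ?_, fun t ht => ?_,
    fun t ht => ?_, fun i hi j hj => ?_, ?_⟩
  · rw [mem_Level] at hi hj
    have hLT := not_levelLT_self q w t
    simp only [matchRel, hi, hj, hLT, hij, hij.symm, false_and, or_self, not_false_eq_true,
      and_self]
  · exact (hq.levelLT_or_levelLT hst).imp hq.sqBelow_matchRel hq.sqBelow_matchRel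
  · exact hq.sqBelow_matchRel (hq.zero_levelLT ht)
  · exact hq.sqBelow_matchRel (hq.levelLT_one ht)
  · exact matchRel_of_levelLT (hq.zero_levelLT one_ne_zero) hi hj
      (extendsToMatching_of_forall_rel (by simp only [card_Level]) hq.complete hi hj)
  · intro _ s t _ _ hst _ _ i hi j hj hij
    obtain ⟨hLT, f, hf, hfq, rfl⟩ := extendsToMatching_of_matchRel hst hi hj hij
    exact ⟨hf.mapsTo.restrict, hf.bijective, fun a =>
      matchRel_of_levelLT hLT a.2 (hf.mapsTo a.2) ⟨f, hf, hfq, rfl⟩, rfl⟩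

theorem Level_subset_Iio (h : t < N) : ↑(Level w t) ⊆ Set.Iio (N * w) := by
  intro e he
  exact (Finset.mem_Ico.1 he).2.trans_le (Nat.mul_le_mul_right w h)

theorem matchRel_congr [NeZero w] (h : ∀ a < N * w, ∀ b < N * w, q a b ↔ q' a b)
    (he : e < N * w) (he' : e' < N * w) : matchRel q w e e' ↔ matchRel q' w e e' := by
  have hdiv : ∀ {a}, a < N * w → ↑(Level w (a / w)) ⊆ Set.Iio (N * w) := fun ha =>
    Level_subset_Iio ((Nat.div_lt_iff_lt_mul (NeZero.pos w)).2 ha)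
  have hbelow : SqBelow q w (e / w) (e' / w) ↔ SqBelow q' w (e / w) (e' / w) :=
    below_congr (hdiv he) (hdiv he') h
  have hbelow' : SqBelow q w (e' / w) (e / w) ↔ SqBelow q' w (e' / w) (e / w) :=
    below_congr (hdiv he') (hdiv he) h
  have hmatch := extendsToMatching_congr (a := e) (b := e')
    fun a ha b hb => h a (hdiv he ha) b (hdiv he' hb)
  rw [matchRel, matchRel, LevelLT, LevelLT, hbelow, hbelow', hmatch]

theorem truncRel_matchRel_congr [NeZero w] (hN : N ≠ 0)
    (h : ∀ a < N * w, ∀ b < N * w, q a b ↔ q' a b) :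
    truncRel (matchRel q w) (N * w - 1) = truncRel (matchRel q' w) (N * w - 1) := by
  have hpos : 0 < N * w := Nat.mul_pos (Nat.pos_of_ne_zero hN) (NeZero.pos w)
  ext a b
  simp only [truncRel, Nat.le_sub_one_iff_lt hpos]
  exact and_congr_right fun ha => and_congr_right fun hb => matchRel_congr h ha hb

end MatchingPresentation

section Enumeration

variable {α : Type*} {r : α → α → Prop} {D : Set α} {w s t e : ℕ} {A : Finset α}
  {L : ℕ → Finset α}

theorem hasWidthLE_preimage [Std.Refl r] {f : ℕ → α} (hr : HasWidthOn r D w) (hf : ∀ e, f e ∈ D) :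
    HasWidthLE (f ⁻¹'o r) w := by
  classical
  refine hasWidthLE_iff_hasWidthOn.2 fun S _ hS => ?_
  have hinj : Set.InjOn f S := fun i hi j hj hij =>
    hS.eq hi hj (hij ▸ refl (f i) : r (f i) (f j))
  rw [← Finset.card_image_of_injOn hinj]
  refine hr _ (by simpa [Set.subset_def] using fun e _ => hf e) ?_
  rw [Finset.coe_image]
  rintro _ ⟨i, hi, rfl⟩ _ ⟨j, hj, rfl⟩ hne
  exact hS hi hj fun hij => hne (congrArg f hij)

variable [Nonempty α]

/-- The map on `ℕ` whose restriction to the round `t` is a bijection onto `A`; it depends on `A`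
alone, so that presenting a sequence of antichains by it is an on-line process. -/
noncomputable def enumLevel (w t : ℕ) (A : Finset α) : ℕ → α :=
  Classical.epsilon fun f => Set.BijOn f (Level w t) A

/-- The presentation of a sequence of antichains `L` of size `w`, the `t`-th one in round `t`. -/
noncomputable def points (w : ℕ) (L : ℕ → Finset α) (e : ℕ) : α :=
  enumLevel w (e / w) (L (e / w)) e

theorem bijOn_enumLevel (t : ℕ) (hA : A.card = w) :
    Set.BijOn (enumLevel w t A) (Level w t) A := by
  refine Classical.epsilon_spec (p := fun f : ℕ → α => Set.BijOn f (Level w t) A) ?_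
  exact (Level w t).finite_toSet.exists_bijOn_of_encard_eq (by simp [card_Level, hA])

theorem bijOn_points [NeZero w] (hL : (L t).card = w) :
    Set.BijOn (points w L) (Level w t) (L t) := by
  refine (bijOn_enumLevel t hL).congr fun e he => ?_
  rw [points, mem_Level.1 he]

theorem points_mem [NeZero w] (hL : ∀ t, (L t).card = w) (e : ℕ) : points w L e ∈ L (e / w) :=
  (bijOn_points (hL _)).mapsTo (mem_Level_div e)

theorem sqBelow_points_iff [NeZero w] (hL : ∀ t, (L t).card = w) :
    SqBelow (points w L ⁻¹'o r) w s t ↔ Below r (L s) (L t) := by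
  have hs := bijOn_points (hL s)
  have ht := bijOn_points (hL t)
  constructor
  · intro h a ha
    obtain ⟨i, hi, rfl⟩ := hs.surjOn ha
    obtain ⟨j, hj, hij⟩ := h i hi
    exact ⟨points w L j, ht.mapsTo hj, hij⟩
  · intro h i hi
    obtain ⟨b, hb, hib⟩ := h (points w L i) (hs.mapsTo hi)
    obtain ⟨j, hj, rfl⟩ := ht.surjOn hb
    exact ⟨j, hj, hib⟩

theorem isPreregular_points [Std.Refl r] [NeZero w] (hr : HasWidthOn r D w)
    (hL : ∀ t, IsMaximumAntichain r D w (L t))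
    (htotal : ∀ s t, Below r (L s) (L t) ∨ Below r (L t) (L s))
    (hzero : ∀ t, Below r (L 0) (L t)) (hone : ∀ t, Below r (L t) (L 1))
    (hnot : ∀ t ≠ 1, ¬ Below r (L 1) (L t)) (hcomplete : ∀ a ∈ L 0, ∀ b ∈ L 1, r a b) :
    IsPreregular (points w L ⁻¹'o r) w := by
  have hcard t := (hL t).card_eq
  have hbij t := bijOn_points (hcard t)
  exact
    { hasWidthLE := hasWidthLE_preimage hr fun e => (hL _).subset (points_mem hcard e)
      antichain := fun t i hi j hj hij => (hL t).antichain ((hbij t).mapsTo hi)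
        ((hbij t).mapsTo hj) ((hbij t).injOn.ne hi hj hij)
      total := fun s t => by simpa only [sqBelow_points_iff hcard] using htotal s t
      zero_below := fun t => (sqBelow_points_iff hcard).2 (hzero t)
      below_one := fun t => (sqBelow_points_iff hcard).2 (hone t)
      not_one_below := fun t ht h => hnot t ht ((sqBelow_points_iff hcard).1 h)
      complete := fun i hi j hj =>
        hcomplete _ ((hbij 0).mapsTo hi) _ ((hbij 1).mapsTo hj) }

theorem points_congr {L' : ℕ → Finset α} (h : L (e / w) = L' (e / w)) :
    points w L e = points w L' e := by
  rw [points, points, h]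

end Enumeration

section Bounds

variable {α β : Type*} {r : α → α → Prop} {s : β → β → Prop} {v w : ℕ}

theorem hasWidthOn_card [Fintype α] (r : α → α → Prop) (D : Set α) :
    HasWidthOn r D (Fintype.card α) :=
  fun A _ _ => A.card_le_univ

theorem HasWidthOn.sumLiftRel {D : Set (α ⊕ β)} (hr : HasWidthOn r (Sum.inl ⁻¹' D) v)
    (hs : HasWidthOn s (Sum.inr ⁻¹' D) w) : HasWidthOn (Sum.LiftRel r s) D (v + w) := by
  intro A hAD hA
  rw [← Finset.card_toLeft_add_card_toRight]
  refine add_le_add (hr _ (fun a ha => hAD (Finset.mem_toLeft.1 ha)) fun a ha b hb hab h => ?_)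
    (hs _ (fun a ha => hAD (Finset.mem_toRight.1 ha)) fun a ha b hb hab h => ?_)
  · exact hA (Finset.mem_toLeft.1 ha) (Finset.mem_toLeft.1 hb) (by simpa using hab) (.inl h)
  · exact hA (Finset.mem_toRight.1 ha) (Finset.mem_toRight.1 hb) (by simpa using hab) (.inr h)

theorem HasWidthOn.sumLex {D : Set (α ⊕ β)} (hr : HasWidthOn r (Sum.inl ⁻¹' D) w)
    (hs : HasWidthOn s (Sum.inr ⁻¹' D) w) : HasWidthOn (Sum.Lex r s) D w := by
  intro A hAD hA
  have hleft : A.toLeft.card ≤ w := hr _ (fun a ha => hAD (Finset.mem_toLeft.1 ha))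
    fun a ha b hb hab h => hA (Finset.mem_toLeft.1 ha) (Finset.mem_toLeft.1 hb)
      (by simpa using hab) (.inl h)
  have hright : A.toRight.card ≤ w := hs _ (fun a ha => hAD (Finset.mem_toRight.1 ha))
    fun a ha b hb hab h => hA (Finset.mem_toRight.1 ha) (Finset.mem_toRight.1 hb)
      (by simpa using hab) (.inr h)
  rw [← Finset.card_toLeft_add_card_toRight]
  rcases A.toLeft.eq_empty_or_nonempty with h | ⟨a, ha⟩
  · simpa only [h, Finset.card_empty, zero_add] using hright
  rcases A.toRight.eq_empty_or_nonempty with h | ⟨b, hb⟩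
  · simpa only [h, Finset.card_empty, add_zero] using hleft
  · exact (hA (Finset.mem_toLeft.1 ha) (Finset.mem_toRight.1 hb) Sum.inl_ne_inr (.sep a b)).elim

instance : IsPartialOrder α (· = ·) where
  antisymm _ _ hab _ := hab

instance [IsPartialOrder α r] [IsPartialOrder β s] : IsPartialOrder (α ⊕ β) (Sum.LiftRel r s) where

/-- The ground set `α` together with `w` new bottom elements and `w` new top elements. -/
abbrev Bounded (w : ℕ) (α : Type*) : Type _ :=
  Fin w ⊕ (α ⊕ Fin w)

/-- The extension of `r` to `Bounded w α` by a bottom antichain and a top antichain. -/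
abbrev boundedRel (w : ℕ) (r : α → α → Prop) : Bounded w α → Bounded w α → Prop :=
  Sum.Lex (· = ·) (Sum.Lex r (· = ·))

/-- The subset `D` of `α` together with all the bottom and top elements. -/
def boundedSet (w : ℕ) (D : Set α) : Set (Bounded w α) :=
  {x | ∀ a, x = .inr (.inl a) → a ∈ D}

/-- The antichain of the new bottom elements. -/
def bottom (w : ℕ) (α : Type*) : Finset (Bounded w α) :=
  Finset.univ.map .inl

/-- The antichain of the new top elements. -/
def top (w : ℕ) (α : Type*) : Finset (Bounded w α) :=
  Finset.univ.map (.trans .inr .inr)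

/-- The sequence of antichains that starts with the bottom and the top antichain. -/
def withBounds (L : ℕ → Finset (Bounded w α)) : ℕ → Finset (Bounded w α)
  | 0 => bottom w α
  | 1 => top w α
  | t + 2 => L t

variable {D : Set α} {A : Finset α} {E : Finset (Bounded w α)} {L : ℕ → Finset (Bounded w α)}

instance [IsPartialOrder α r] : IsPartialOrder (Bounded w α) (boundedRel w r) where

theorem mem_bottom {x : Bounded w α} : x ∈ bottom w α ↔ ∃ c, x = .inl c := by
  simp [bottom, eq_comm]

theorem mem_top {x : Bounded w α} : x ∈ top w α ↔ ∃ c, x = .inr (.inr c) := by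
  simp [top, eq_comm]

theorem inr_inl_mem_boundedSet {a : α} : .inr (.inl a) ∈ boundedSet w D ↔ a ∈ D := by
  simp [boundedSet]

theorem boundedSet_mono {D' : Set α} (h : D ⊆ D') : boundedSet w D ⊆ boundedSet w D' :=
  fun _ hx a ha => h (hx a ha)

theorem HasWidthOn.boundedRel (hr : HasWidthOn r D w) :
    HasWidthOn (boundedRel w r) (boundedSet w D) w := by
  have hFin (D : Set (Fin w)) : HasWidthOn (· = ·) D w := by
    simpa using hasWidthOn_card (· = ·) D
  refine (hFin _).sumLex (.sumLex (hr.mono fun a ha => ?_) (hFin _))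
  exact inr_inl_mem_boundedSet.1 ha

theorem isMaximumAntichain_bottom (r : α → α → Prop) (D : Set α) :
    IsMaximumAntichain (boundedRel w r) (boundedSet w D) w (bottom w α) where
  subset x hx := by
    obtain ⟨c, rfl⟩ := mem_bottom.1 hx
    simp [boundedSet]
  antichain x hx y hy hne h := by
    obtain ⟨c, rfl⟩ := mem_bottom.1 hx
    obtain ⟨d, rfl⟩ := mem_bottom.1 hy
    obtain rfl : c = d := Sum.lex_inl_inl.1 h
    exact hne rfl
  card_eq := by simp [bottom]

theorem isMaximumAntichain_top (r : α → α → Prop) (D : Set α) :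
    IsMaximumAntichain (boundedRel w r) (boundedSet w D) w (top w α) where
  subset x hx := by
    obtain ⟨c, rfl⟩ := mem_top.1 hx
    simp [boundedSet]
  antichain x hx y hy hne h := by
    obtain ⟨c, rfl⟩ := mem_top.1 hx
    obtain ⟨d, rfl⟩ := mem_top.1 hy
    obtain rfl : c = d := Sum.lex_inr_inr.1 (Sum.lex_inr_inr.1 h)
    exact hne rfl
  card_eq := by simp [top]

theorem IsMaximumAntichain.map_boundedRel (hA : IsMaximumAntichain r D w A) :
    IsMaximumAntichain (boundedRel w r) (boundedSet w D) w (A.map (.trans .inl .inr)) where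
  subset x hx := by
    obtain ⟨a, ha, rfl⟩ := Finset.mem_map.1 hx
    exact inr_inl_mem_boundedSet.2 (hA.subset ha)
  antichain x hx y hy hne h := by
    obtain ⟨a, ha, rfl⟩ := Finset.mem_map.1 hx
    obtain ⟨b, hb, rfl⟩ := Finset.mem_map.1 hy
    exact hA.antichain ha hb (fun hab => hne (hab ▸ rfl)) (Sum.lex_inl_inl.1 (Sum.lex_inr_inr.1 h))
  card_eq := by rw [Finset.card_map, hA.card_eq]

theorem below_top [NeZero w] (r : α → α → Prop) (E : Finset (Bounded w α)) :
    Below (boundedRel w r) E (top w α) := by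
  rintro (c | a | c) -
  · exact ⟨.inr (.inr 0), mem_top.2 ⟨0, rfl⟩, .sep _ _⟩
  · exact ⟨.inr (.inr 0), mem_top.2 ⟨0, rfl⟩, .inr (.sep _ _)⟩
  · exact ⟨.inr (.inr c), mem_top.2 ⟨c, rfl⟩, .inr (.inr rfl)⟩

theorem bottom_below [NeZero w] [IsPartialOrder α r] (hr : HasWidthOn r D w)
    (hE : IsMaximumAntichain (boundedRel w r) (boundedSet w D) w E) :
    Below (boundedRel w r) (bottom w α) E := by
  refine (below_swap_iff (isMaximumAntichain_bottom r D) hE hr.boundedRel).1 ?_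
  rintro (c | y) -
  · exact ⟨.inl c, mem_bottom.2 ⟨c, rfl⟩, .inl rfl⟩
  · exact ⟨.inl 0, mem_bottom.2 ⟨0, rfl⟩, .sep _ _⟩

theorem eq_top_of_top_below (hE : E.card = w) (h : Below (boundedRel w r) (top w α) E) :
    E = top w α := by
  symm
  refine Finset.eq_of_subset_of_card_le (fun x hx => ?_) (by simp [top, hE])
  obtain ⟨y, hy, hxy⟩ := h x hx
  obtain ⟨c, rfl⟩ := mem_top.1 hx
  rcases hxy with _ | hxy
  rcases hxy with _ | rfl
  exact hy

theorem withBounds_ne_top [NeZero w] (hL : ∀ t, L t ≠ top w α) :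
    ∀ t ≠ 1, withBounds L t ≠ top w α
  | 0, _, h => by simpa using mem_top.1 (h ▸ mem_bottom.2 ⟨0, rfl⟩ : .inl 0 ∈ top w α)
  | t + 2, _, h => hL t h

theorem isPreregular_withBounds [NeZero w] [IsPartialOrder α r] (hr : HasWidthOn r D w)
    (hL : ∀ t, IsMaximumAntichain (boundedRel w r) (boundedSet w D) w (L t))
    (htop : ∀ t, L t ≠ top w α)
    (hchain : ∀ m n, m < n → SymmGen (Below (boundedRel w r)) (L n) (L m)) :
    IsPreregular (points w (withBounds L) ⁻¹'o boundedRel w r) w := by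
  have hmax : ∀ t, IsMaximumAntichain (boundedRel w r) (boundedSet w D) w (withBounds L t)
    | 0 => isMaximumAntichain_bottom r D
    | 1 => isMaximumAntichain_top r D
    | t + 2 => hL t
  have htotal : ∀ s t, Below (boundedRel w r) (withBounds L s) (withBounds L t) ∨
      Below (boundedRel w r) (withBounds L t) (withBounds L s)
    | 0, t => .inl (bottom_below hr (hmax t))
    | 1, t => .inr (below_top r _)
    | s, 0 => .inr (bottom_below hr (hmax s))
    | s, 1 => .inl (below_top r _)
    | s + 2, t + 2 => by
      rcases lt_trichotomy s t with hst | rfl | hts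
      · exact (hchain s t hst).symm
      · exact .inl (refl _)
      · exact hchain t s hts
  refine isPreregular_points hr.boundedRel hmax htotal (fun t => bottom_below hr (hmax t))
    (fun t => below_top r _)
    (fun t ht h => withBounds_ne_top htop t ht (eq_top_of_top_below (hmax t).card_eq h))
    fun x hx y hy => ?_
  obtain ⟨c, rfl⟩ := mem_bottom.1 hx
  obtain ⟨d, rfl⟩ := mem_top.1 hy
  exact .sep _ _

end Bounds

section Padding

variable {α : Type*} {r : α → α → Prop} {D : Set α} {A : Finset α} {v w : ℕ}

/-- The ground set `α` together with `v` isolated points. -/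
abbrev Padded (v : ℕ) (α : Type*) : Type _ :=
  Fin v ⊕ α

/-- The extension of `r` to `Padded v α` in which the new points are isolated. -/
abbrev paddedRel (v : ℕ) (r : α → α → Prop) : Padded v α → Padded v α → Prop :=
  Sum.LiftRel (· = ·) r

/-- The subset `D` of `α` together with all the new points. -/
def paddedSet (v : ℕ) (D : Set α) : Set (Padded v α) :=
  {x | ∀ a, x = .inr a → a ∈ D}

theorem inr_mem_paddedSet {a : α} : .inr a ∈ paddedSet v D ↔ a ∈ D := by
  simp [paddedSet]

theorem paddedSet_mono {D' : Set α} (h : D ⊆ D') : paddedSet v D ⊆ paddedSet v D' :=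
  fun _ hx a ha => h (hx a ha)

theorem HasWidthOn.paddedRel (hr : HasWidthOn r D w) (v : ℕ) :
    HasWidthOn (paddedRel v r) (paddedSet v D) (v + w) := by
  refine .sumLiftRel (by simpa using hasWidthOn_card (α := Fin v) (· = ·) _)
    (hr.mono fun a ha => ?_)
  exact inr_mem_paddedSet.1 ha

theorem IsMaximumAntichain.disjSum_paddedRel (hA : IsMaximumAntichain r D w A) (v : ℕ) :
    IsMaximumAntichain (paddedRel v r) (paddedSet v D) (v + w) (Finset.univ.disjSum A) where
  subset x hx a ha := by
    subst ha
    exact hA.subset (Finset.inr_mem_disjSum.1 hx)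
  antichain := by
    rintro _ hx _ hy hne (⟨rfl⟩ | ⟨h⟩)
    · exact hne rfl
    · exact hA.antichain (Finset.inr_mem_disjSum.1 hx) (Finset.inr_mem_disjSum.1 hy)
        (fun hab => hne (hab ▸ rfl)) h
  card_eq := by simp [hA.card_eq]

theorem paddedRel_congr {r' : α → α → Prop} (h : ∀ a ∈ D, ∀ b ∈ D, r a b ↔ r' a b) :
    ∀ x ∈ paddedSet v D, ∀ y ∈ paddedSet v D, paddedRel v r x y ↔ paddedRel v r' x y := by
  rintro (c | a) hx (d | b) hy
  · simp
  · simp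
  · simp
  · simpa using h a (inr_mem_paddedSet.1 hx) b (inr_mem_paddedSet.1 hy)

theorem boundedRel_congr {r' : α → α → Prop} (h : ∀ a ∈ D, ∀ b ∈ D, r a b ↔ r' a b) :
    ∀ x ∈ boundedSet w D, ∀ y ∈ boundedSet w D, boundedRel w r x y ↔ boundedRel w r' x y := by
  rintro (c | a | c) hx (d | b | d) hy
  case inr.inl.inr.inl =>
    simpa using h a (inr_inl_mem_boundedSet.1 hx) b (inr_inl_mem_boundedSet.1 hy)
  all_goals simp

end Padding

section Rank

variable {r r' : ℕ → ℕ → Prop} {n w : ℕ}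

/-- The largest size of an antichain that contains `n` and whose other members are earlier elements
of rank at most that size. -/
noncomputable def rank (r : ℕ → ℕ → Prop) (n : ℕ) : ℕ :=
  sSup {c | ∃ A : Finset ℕ, A.card = c ∧ n ∈ A ∧
    (∀ m ∈ A, m ≠ n → ∃ _ : m < n, rank r m ≤ c) ∧ IsAntichain r (A : Set ℕ)}
termination_by n

/-- The antichain `A` is admissible in the definition of the rank of `n`. -/
structure IsRankAntichain (r : ℕ → ℕ → Prop) (n : ℕ) (A : Finset ℕ) : Prop where
  mem : n ∈ A
  lt_and_rank_le : ∀ m ∈ A, m ≠ n → m < n ∧ rank r m ≤ A.card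
  antichain : IsAntichain r (A : Set ℕ)

theorem IsRankAntichain.le {A : Finset ℕ} (hA : IsRankAntichain r n A) {m : ℕ} (hm : m ∈ A) :
    m ≤ n := by
  by_cases hmn : m = n
  · exact hmn.le
  · exact (hA.lt_and_rank_le m hm hmn).1.le

theorem rank_eq_sSup (r : ℕ → ℕ → Prop) (n : ℕ) :
    rank r n = sSup (Finset.card '' {A | IsRankAntichain r n A}) := by
  rw [rank]
  congr 1
  ext c
  constructor
  · rintro ⟨A, rfl, hn, hlt, hA⟩
    exact ⟨A, ⟨hn, fun m hm hmn => exists_prop.1 (hlt m hm hmn), hA⟩, rfl⟩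
  · rintro ⟨A, ⟨hn, hlt, hA⟩, rfl⟩
    exact ⟨A, rfl, hn, fun m hm hmn => exists_prop.2 (hlt m hm hmn), hA⟩

theorem bddAbove_card_isRankAntichain (r : ℕ → ℕ → Prop) (n : ℕ) :
    BddAbove (Finset.card '' {A | IsRankAntichain r n A}) := by
  refine ⟨n + 1, ?_⟩
  rintro _ ⟨A, hA, rfl⟩
  rw [← Finset.card_range (n + 1)]
  exact Finset.card_le_card fun m hm => Finset.mem_range_succ_iff.2 (hA.le hm)

theorem IsRankAntichain.card_le_rank {A : Finset ℕ} (hA : IsRankAntichain r n A) :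
    A.card ≤ rank r n := by
  rw [rank_eq_sSup]
  exact le_csSup (bddAbove_card_isRankAntichain r n) ⟨A, hA, rfl⟩

theorem isRankAntichain_singleton (r : ℕ → ℕ → Prop) (n : ℕ) : IsRankAntichain r n {n} :=
  ⟨Finset.mem_singleton_self n, fun _ hm hmn => absurd (Finset.mem_singleton.1 hm) hmn, by simp⟩

theorem rank_pos (r : ℕ → ℕ → Prop) (n : ℕ) : 0 < rank r n :=
  (isRankAntichain_singleton r n).card_le_rank

theorem exists_isRankAntichain_card_eq (r : ℕ → ℕ → Prop) (n : ℕ) :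
    ∃ A, IsRankAntichain r n A ∧ A.card = rank r n := by
  have hne : (Finset.card '' {A | IsRankAntichain r n A}).Nonempty :=
    ⟨_, {n}, isRankAntichain_singleton r n, rfl⟩
  rw [rank_eq_sSup]
  exact Nat.sSup_mem hne (bddAbove_card_isRankAntichain r n)

theorem rank_le (hr : HasWidthLE r w) (n : ℕ) : rank r n ≤ w := by
  obtain ⟨A, hA, hcard⟩ := exists_isRankAntichain_card_eq r n
  exact hcard ▸ hasWidthLE_iff_hasWidthOn.1 hr A (Set.subset_univ _) hA.antichain

theorem exists_isMaximumAntichain_rank (r : ℕ → ℕ → Prop) (n : ℕ) :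
    ∃ A, IsMaximumAntichain r {m | m ≤ n ∧ rank r m ≤ rank r n} (rank r n) A ∧ n ∈ A := by
  obtain ⟨A, hA, hcard⟩ := exists_isRankAntichain_card_eq r n
  refine ⟨A, ⟨fun m hm => ⟨hA.le hm, ?_⟩, hA.antichain, hcard⟩, hA.mem⟩
  by_cases hmn : m = n
  · rw [hmn]
  · exact hcard ▸ (hA.lt_and_rank_le m hm hmn).2

/-- An antichain of more than `j` elements forces its latest element to have rank more than `j`. -/
theorem hasWidthOn_rank_le (r : ℕ → ℕ → Prop) (j : ℕ) : HasWidthOn r {m | rank r m ≤ j} j := by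
  intro A hAj hA
  by_contra! hcard
  have hne : A.Nonempty := Finset.card_pos.1 (Nat.zero_lt_of_lt hcard)
  have hrank : IsRankAntichain r (A.max' hne) A :=
    ⟨A.max'_mem hne, fun m hm hmn => ⟨lt_of_le_of_ne (A.le_max' m hm) hmn,
      (hAj hm).trans hcard.le⟩, hA⟩
  exact (hrank.card_le_rank.trans (hAj (A.max'_mem hne))).not_gt hcard

theorem rank_congr (h : ∀ a ≤ n, ∀ b ≤ n, r a b ↔ r' a b) : rank r n = rank r' n := by
  induction n using Nat.strong_induction_on with
  | _ n ih =>
    rw [rank, rank]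
    congr 1
    ext c
    refine exists_congr fun A => and_congr_right fun _ => and_congr_right fun _ => ?_
    have hrank : ∀ m < n, rank r m = rank r' m := fun m hm =>
      ih m hm fun a ha b hb => h a (ha.trans hm.le) b (hb.trans hm.le)
    refine (and_congr_left' ?_).trans (and_congr_right fun hA => ?_)
    · exact forall₃_congr fun m _ _ => exists_congr fun hm => by rw [hrank m hm]
    · refine isAntichain_congr_of_subset (D := Set.Iic n) (fun m hm => ?_) h
      by_cases hmn : m = n
      · exact hmn.le
      · exact (hA m hm hmn).1.le

end Rank

section Algorithm

variable {r r' : ℕ → ℕ → Prop} {w k i m n e : ℕ} {B : (ℕ → ℕ → Prop) → ℕ → ℕ}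

/-- The ground set of the layer `i`, from which the chains of the elements of rank `i` are read off:
isolated points fill up the width to `w`, and a bottom and a top antichain serve as the first two
rounds. -/
abbrev LayerPoint (w i : ℕ) : Type :=
  Bounded w (Padded (w - i) ℕ)

/-- The order on `LayerPoint w i` induced by `r`. -/
abbrev layerRel (w i : ℕ) (r : ℕ → ℕ → Prop) : LayerPoint w i → LayerPoint w i → Prop :=
  boundedRel w (paddedRel (w - i) r)

/-- The part of `LayerPoint w i` available at time `n`: the elements of rank at most `i` presented
so far, and all the added points. -/
def layerSet (r : ℕ → ℕ → Prop) (w i n : ℕ) : Set (LayerPoint w i) :=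
  boundedSet w (paddedSet (w - i) {m | m ≤ n ∧ rank r m ≤ i})

/-- The copy of `n` in `LayerPoint w i`. -/
def element (w i n : ℕ) : LayerPoint w i :=
  .inr (.inl (.inr n))

/-- The point that the `n`-th antichain of the layer `i` has to contain: `n` if it has rank `i`, and
a bottom element otherwise. -/
noncomputable def layerPivot [NeZero w] (r : ℕ → ℕ → Prop) (i n : ℕ) : LayerPoint w i :=
  if rank r n = i then element w i n else .inl 0

/-- The `n`-th antichain of the layer `i`, chosen at the time `n`. -/
noncomputable def layerLevel [NeZero w] (r : ℕ → ℕ → Prop) (i : ℕ) : ℕ → Finset (LayerPoint w i) :=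
  greedyLevel (layerRel w i r) w (layerSet r w i) (layerPivot r i)

/-- The presentation of the antichains of the layer `i`, preceded by the bottom and the top. -/
noncomputable def layerPoints (w : ℕ) [NeZero w] (r : ℕ → ℕ → Prop) (i : ℕ) : ℕ → LayerPoint w i :=
  points w (withBounds (layerLevel r i))

/-- The regular poset whose chain partition determines the chains of the elements of rank `i`. -/
def layerPresentation (w : ℕ) [NeZero w] (r : ℕ → ℕ → Prop) (i : ℕ) : ℕ → ℕ → Prop :=
  matchRel (layerPoints w r i ⁻¹'o layerRel w i r) w

/-- The element of the round `n + 2` of the layer `i` that presents `n`. -/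
noncomputable def representative (w : ℕ) [NeZero w] (r : ℕ → ℕ → Prop) (i n : ℕ) : ℕ :=
  Classical.epsilon fun e => e ∈ Level w (n + 2) ∧ layerPoints w r i e = element w i n

/-- The chain that the algorithm `B` for regular posets assigns to `n` in the layer `i`. -/
noncomputable def layerColour (B : (ℕ → ℕ → Prop) → ℕ → ℕ) (w : ℕ) [NeZero w] (r : ℕ → ℕ → Prop)
    (i n : ℕ) : ℕ :=
  B (truncRel (layerPresentation w r i) ((n + 3) * w - 1)) (representative w r i n)

/-- The on-line algorithm built from the algorithm `B` for regular posets: it uses a separate block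
of `k` chains for each of the ranks `1, …, w`. -/
noncomputable def rankAlgorithm (B : (ℕ → ℕ → Prop) → ℕ → ℕ) (w : ℕ) [NeZero w] (k : ℕ)
    (r : ℕ → ℕ → Prop) (n : ℕ) : ℕ :=
  (rank r n - 1) * k + layerColour B w r (rank r n) n

theorem layerSet_mono (r : ℕ → ℕ → Prop) (w i : ℕ) : Monotone (layerSet r w i) :=
  fun _ _ hmn => boundedSet_mono (paddedSet_mono fun _ ha => ⟨ha.1.trans hmn, ha.2⟩)

theorem layerSet_subset (r : ℕ → ℕ → Prop) (w i n : ℕ) :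
    layerSet r w i n ⊆ boundedSet w (paddedSet (w - i) {m | rank r m ≤ i}) :=
  boundedSet_mono (paddedSet_mono fun _ ha => ha.2)

theorem hasWidthOn_paddedRel_rank_le (r : ℕ → ℕ → Prop) (hi : i ≤ w) :
    HasWidthOn (paddedRel (w - i) r) (paddedSet (w - i) {m | rank r m ≤ i}) w := by
  simpa only [Nat.sub_add_cancel hi] using (hasWidthOn_rank_le r i).paddedRel (w - i)

section Correctness

variable [NeZero w]

theorem exists_isMaximumAntichain_layerPivot_mem (r : ℕ → ℕ → Prop) (hi : i ≤ w) (n : ℕ) :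
    ∃ A, IsMaximumAntichain (layerRel w i r) (layerSet r w i n) w A ∧ layerPivot r i n ∈ A := by
  rw [layerPivot]
  split_ifs with hn
  · subst hn
    obtain ⟨A, hA, hnA⟩ := exists_isMaximumAntichain_rank r n
    have hpad := hA.disjSum_paddedRel (w - rank r n)
    rw [Nat.sub_add_cancel hi] at hpad
    exact ⟨_, hpad.map_boundedRel,
      Finset.mem_map_of_mem (.trans .inl .inr) (Finset.inr_mem_disjSum.2 hnA)⟩
  · exact ⟨_, isMaximumAntichain_bottom _ _, mem_bottom.2 ⟨0, rfl⟩⟩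

variable [IsPartialOrder ℕ r]

theorem layerLevel_spec (hi : i ≤ w) (n : ℕ) :
    IsMaximumAntichain (layerRel w i r) (layerSet r w i n) w (layerLevel r i n) ∧
      layerPivot r i n ∈ layerLevel (w := w) r i n ∧
      ∀ m < n, SymmGen (Below (layerRel w i r)) (layerLevel r i n) (layerLevel r i m) :=
  greedyLevel_spec (layerSet_mono r w i)
    ((hasWidthOn_paddedRel_rank_le r hi).boundedRel.mono
      (Set.iUnion_subset fun n => layerSet_subset r w i n))
    (exists_isMaximumAntichain_layerPivot_mem r hi) n

theorem layerPivot_notMem_top (r : ℕ → ℕ → Prop) (i n : ℕ) :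
    layerPivot r i n ∉ top w (Padded (w - i) ℕ) := by
  rw [layerPivot, mem_top]
  split_ifs <;> simp [element]

theorem card_withBounds_layerLevel (hi : i ≤ w) :
    ∀ t, (withBounds (layerLevel (w := w) r i) t).card = w
  | 0 => (isMaximumAntichain_bottom (paddedRel _ r) Set.univ).card_eq
  | 1 => (isMaximumAntichain_top (paddedRel _ r) Set.univ).card_eq
  | t + 2 => (layerLevel_spec hi t).1.card_eq

theorem isPreregular_layerPoints (hi : i ≤ w) :
    IsPreregular (layerPoints w r i ⁻¹'o layerRel w i r) w :=
  isPreregular_withBounds (hasWidthOn_paddedRel_rank_le r hi)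
    (fun t => (layerLevel_spec hi t).1.mono (layerSet_subset r w i t))
    (fun t h => layerPivot_notMem_top r i t (h ▸ (layerLevel_spec hi t).2.1))
    fun m n => (layerLevel_spec hi n).2.2 m

theorem representative_spec (hn : rank r n ≤ w) :
    representative w r (rank r n) n ∈ Level w (n + 2) ∧
      layerPoints w r (rank r n) (representative w r (rank r n) n) = element w (rank r n) n := by
  refine Classical.epsilon_spec (p := fun e => e ∈ Level w (n + 2) ∧
    layerPoints w r (rank r n) e = element w (rank r n) n) ?_
  have hmem : element w (rank r n) n ∈ layerLevel r (rank r n) n := by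
    simpa only [layerPivot, if_true] using (layerLevel_spec (r := r) hn n).2.1
  exact (bijOn_points (card_withBounds_layerLevel (r := r) hn (n + 2))).surjOn hmem

theorem isChainCol_layerPresentation (hB : SolvesRegular B w k) (hi : i ≤ w) :
    IsChainCol (layerPresentation w r i)
      (fun e => B (truncRel (layerPresentation w r i) ((e / w + 1) * w - 1)) e) k :=
  hB _ isPartialOrder_matchRel (isPreregular_layerPoints hi).isRegularPresentation_matchRel

theorem layerColour_rank_eq (B : (ℕ → ℕ → Prop) → ℕ → ℕ) (hn : rank r n ≤ w) :
    layerColour B w r (rank r n) n = B (truncRel (layerPresentation w r (rank r n))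
      ((representative w r (rank r n) n / w + 1) * w - 1)) (representative w r (rank r n) n) := by
  rw [mem_Level.1 (representative_spec (r := r) hn).1, layerColour]

theorem rel_of_layerPresentation_representative (hn : rank r n ≤ w) (hmn : rank r m = rank r n)
    (h : layerPresentation w r (rank r n) (representative w r (rank r n) m)
      (representative w r (rank r n) n)) : r m n := by
  have hm := (representative_spec (hmn.trans_le hn)).2
  have hrel := rel_of_matchRel h
  rw [hmn] at hm
  rw [Order.Preimage, hm, (representative_spec hn).2] at hrel
  simpa [element] using hrel

theorem rel_of_layerColour_eq (hB : SolvesRegular B w k) (hn : rank r n ≤ w)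
    (hmn : rank r m = rank r n)
    (h : layerColour B w r (rank r m) m = layerColour B w r (rank r n) n) : r m n ∨ r n m := by
  have hm := hmn.trans_le hn
  rw [layerColour_rank_eq B hm, layerColour_rank_eq B hn, hmn] at h
  rcases (isChainCol_layerPresentation hB hn).2 _ _ h with hlt | hgt | heq
  · exact .inl (rel_of_layerPresentation_representative hn hmn hlt)
  · refine .inr (rel_of_layerPresentation_representative hm hmn.symm ?_)
    rwa [hmn]
  · exact .inl (rel_of_layerPresentation_representative hn hmn (heq ▸ .inl rfl))

theorem rankAlgorithm_isChainCol (hB : SolvesRegular B w k) (hr : HasWidthLE r w) :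
    IsChainCol r (rankAlgorithm B w k r) (w * k) := by
  have hlt n : layerColour B w r (rank r n) n < k :=
    layerColour_rank_eq B (rank_le hr n) ▸ (isChainCol_layerPresentation hB (rank_le hr n)).1 _
  have hlt_block n : rankAlgorithm B w k r n < (rank r n - 1 + 1) * k := by
    rw [Nat.succ_mul]
    exact Nat.add_lt_add_left (hlt n) _
  have hdiv n : rankAlgorithm B w k r n / k = rank r n - 1 :=
    Nat.div_eq_of_lt_le (Nat.le_add_right _ _) (hlt_block n)
  refine ⟨fun n => ?_, fun m n hmn => ?_⟩
  · refine (hlt_block n).trans_le (Nat.mul_le_mul_right k ?_)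
    exact (Nat.sub_add_cancel (rank_pos r n)).trans_le (rank_le hr n)
  · have hrank : rank r m = rank r n := by
      rw [← tsub_left_inj (rank_pos r m) (rank_pos r n), ← hdiv m, ← hdiv n, hmn]
    rw [rankAlgorithm, rankAlgorithm, hrank, Nat.add_left_cancel_iff] at hmn
    exact (rel_of_layerColour_eq hB (rank_le hr n) hrank (hrank ▸ hmn)).imp_right .inl

end Correctness

section Locality

theorem layerSet_congr (h : ∀ a ≤ n, ∀ b ≤ n, r a b ↔ r' a b) :
    layerSet r w i n = layerSet r' w i n := by
  have hset : {m | m ≤ n ∧ rank r m ≤ i} = {m | m ≤ n ∧ rank r' m ≤ i} := by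
    ext m
    refine and_congr_right fun hm => ?_
    rw [rank_congr fun a ha b hb => h a (ha.trans hm) b (hb.trans hm)]
  rw [layerSet, layerSet, hset]

theorem layerRel_congr (h : ∀ a ≤ n, ∀ b ≤ n, r a b ↔ r' a b) :
    ∀ x ∈ layerSet r w i n, ∀ y ∈ layerSet r w i n, layerRel w i r x y ↔ layerRel w i r' x y :=
  boundedRel_congr (paddedRel_congr fun a ha b hb => h a ha.1 b hb.1)

variable [NeZero w] [IsPartialOrder ℕ r]

theorem layerLevel_congr (hi : i ≤ w) (h : ∀ a ≤ n, ∀ b ≤ n, r a b ↔ r' a b) :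
    layerLevel (w := w) r i n = layerLevel r' i n := by
  have hle : ∀ m ≤ n, ∀ a ≤ m, ∀ b ≤ m, r a b ↔ r' a b := fun m hm a ha b hb =>
    h a (ha.trans hm) b (hb.trans hm)
  refine greedyLevel_congr (layerSet_mono r w i)
    (fun m _ => (layerLevel_spec hi m).1.subset) (fun m hm => layerSet_congr (hle m hm))
    (fun m hm => ?_) (layerRel_congr h)
  rw [layerPivot, layerPivot, rank_congr (hle m hm)]

theorem withBounds_layerLevel_congr (hi : i ≤ w) (h : ∀ a ≤ n, ∀ b ≤ n, r a b ↔ r' a b) :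
    ∀ t < n + 3, withBounds (layerLevel (w := w) r i) t = withBounds (layerLevel r' i) t
  | 0, _ => rfl
  | 1, _ => rfl
  | t + 2, ht => layerLevel_congr hi fun a ha b hb => h a (by omega) b (by omega)

theorem layerPoints_congr (hi : i ≤ w) (h : ∀ a ≤ n, ∀ b ≤ n, r a b ↔ r' a b)
    (he : e < (n + 3) * w) : layerPoints w r i e = layerPoints w r' i e :=
  points_congr (withBounds_layerLevel_congr hi h _
    ((Nat.div_lt_iff_lt_mul (NeZero.pos w)).2 he))

theorem withBounds_layerLevel_subset (hi : i ≤ w) :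
    ∀ t < n + 3, ↑(withBounds (layerLevel (w := w) r i) t) ⊆ layerSet r w i n
  | 0, _ => (isMaximumAntichain_bottom (paddedRel _ r) _).subset
  | 1, _ => (isMaximumAntichain_top (paddedRel _ r) _).subset
  | t + 2, ht => (layerLevel_spec hi t).1.subset.trans (layerSet_mono r w i (by omega))

theorem layerPoints_mem_layerSet (hi : i ≤ w) (he : e < (n + 3) * w) :
    layerPoints w r i e ∈ layerSet r w i n :=
  withBounds_layerLevel_subset hi _ ((Nat.div_lt_iff_lt_mul (NeZero.pos w)).2 he)
    (points_mem (card_withBounds_layerLevel hi) e)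

theorem truncRel_layerPresentation_congr (hi : i ≤ w) (h : ∀ a ≤ n, ∀ b ≤ n, r a b ↔ r' a b) :
    truncRel (layerPresentation w r i) ((n + 3) * w - 1) =
      truncRel (layerPresentation w r' i) ((n + 3) * w - 1) := by
  refine truncRel_matchRel_congr (Nat.succ_ne_zero _) fun a ha b hb => ?_
  rw [Order.Preimage, Order.Preimage, ← layerPoints_congr hi h ha, ← layerPoints_congr hi h hb]
  exact layerRel_congr h _ (layerPoints_mem_layerSet hi ha) _ (layerPoints_mem_layerSet hi hb)

theorem representative_congr (hi : i ≤ w) (h : ∀ a ≤ n, ∀ b ≤ n, r a b ↔ r' a b) :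
    representative w r i n = representative w r' i n := by
  rw [representative, representative]
  congr 1
  ext e
  refine and_congr_right fun he => ?_
  rw [layerPoints_congr hi h (Level_subset_Iio (Nat.lt_succ_self _) he)]

theorem rankAlgorithm_congr (B : (ℕ → ℕ → Prop) → ℕ → ℕ) (k : ℕ) (hn : rank r n ≤ w)
    (h : ∀ a ≤ n, ∀ b ≤ n, r a b ↔ r' a b) :
    rankAlgorithm B w k r n = rankAlgorithm B w k r' n := by
  rw [rankAlgorithm, rankAlgorithm, ← rank_congr h, layerColour, layerColour,
    truncRel_layerPresentation_congr hn h, representative_congr hn h]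

end Locality

theorem solvesOnline_rankAlgorithm [NeZero w] (hB : SolvesRegular B w k) :
    SolvesOnline (rankAlgorithm B w k) w (w * k) := by
  intro r hpo hr
  have hlocal n : rankAlgorithm B w k (truncRel r n) n = rankAlgorithm B w k r n :=
    (rankAlgorithm_congr B k (rank_le hr n) fun a ha b hb => by simp [truncRel, ha, hb]).symm
  simpa only [hlocal] using rankAlgorithm_isChainCol hB hr

end Algorithm

end OnlineChainPartition

/-- Lemma 2: `val(w) ≤ w · regval(w)`. If some on-line algorithm partitions every
regular poset of width `w` into at most `k` chains, then some on-line algorithm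
partitions every poset of width `w` into at most `w·k` chains. -/
theorem stmt9 (w k : ℕ) (h : ∃ B, SolvesRegular B w k) :
    ∃ A, SolvesOnline A w (w * k) := by
  obtain ⟨B, hB⟩ := h
  rcases eq_or_ne w 0 with rfl | hw
  · refine ⟨fun _ _ => 0, fun r _ hr => ?_⟩
    exact absurd (hr {0} (by simp)) (by simp)
  · have : NeZero w := ⟨hw⟩
    exact ⟨_, OnlineChainPartition.solvesOnline_rankAlgorithm hB⟩
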